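/- arXiv:2210.05020 — 6 statements merged into one kernel-verified Lean document; each statement's English description precedes it below -/
import Mathlib

section
/- Let n = f + c and let L be a real symmetric positive semidefinite n×n matrix written in block form L = [[L_ff, L_fc], [L_cf, L_cc]] where L_ff is an invertible f×f block, L_cf = L_fcᵀ, and L_cc is c×c. Let S := L_cc − L_cf · L_ff⁻¹ · L_fc be the Schur complement of L_ff in L, let ε > 0, and let S̃ be a real symmetric c×c matrix with S ≈_ε S̃. Define L̃ := [[L_ff, L_fc], [L_cf, S̃ + L_cf · L_ff⁻¹ · L_fc]]. Then: (i) L ≈_ε L̃; and (ii) for every real n×p matrix B and all real n×p matrices X⋆ and X̃ satisfying L·X⋆ = B and L̃·X̃ = B, it holds that ‖X̃ − X⋆‖_L ≤ c(ε)·‖X⋆‖_L, where c(ε) := sqrt(1 + e^{2ε} − 2e^{−ε}). -/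
open Matrix

/-- `A ≈_ε B`: `e^{-ε}·B ⪯ A ⪯ e^{ε}·B` in the Loewner order. -/
def SpecApprox {ι : Type*} [Fintype ι] (ε : ℝ) (A B : Matrix ι ι ℝ) : Prop :=
  (A - Real.exp (-ε) • B).PosSemidef ∧ (Real.exp ε • B - A).PosSemidef

/-- `‖X‖_L = sqrt(trace(Xᵀ L X))`. -/
noncomputable def Lnorm {ι κ : Type*} [Fintype ι] [Fintype κ]
    (L : Matrix ι ι ℝ) (X : Matrix ι κ ℝ) : ℝ :=
  Real.sqrt (Xᵀ * L * X).trace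

/-- `c(ε) = sqrt(1 + e^{2ε} − 2e^{−ε})`. -/
noncomputable def cEps (ε : ℝ) : ℝ :=
  Real.sqrt (1 + Real.exp (2 * ε) - 2 * Real.exp (-ε))

/-! Subtracting the positive semidefinite matrix `[[L_ff, L_fc], [L_cf, L_cf L_ff⁻¹ L_fc]]` from
`L` and from `L̃` leaves `S` and `S̃` padded by zeros, and `≈_ε` is preserved by congruence and by
adding a common positive semidefinite matrix; this gives (i).

For (ii), `L X⋆ = L̃ X̃` gives `⟨X̃, X⋆⟩_L = ‖X̃‖²_L̃`, so that
`‖X̃ - X⋆‖²_L = ‖X̃‖²_L - 2 ‖X̃‖²_L̃ + ‖X⋆‖²_L`. The Loewner bounds between `L` and `L̃` pass,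
reversed, to their pseudoinverses, so `‖X̃‖²_L̃` lies within a factor `e^{±ε}` of `‖X⋆‖²_L`, and
`‖X̃‖²_L ≤ e^ε ‖X̃‖²_L̃ ≤ e^{2ε} ‖X⋆‖²_L`. -/

section Linner

variable {ι κ : Type*} [Fintype ι] [Fintype κ] {A B : Matrix ι ι ℝ} {X Y : Matrix ι κ ℝ} {a : ℝ}

/-- The bilinear form `⟨X, Y⟩_L = trace(Xᵀ L Y)`, whose seminorm is `Lnorm L` when `L` is positive
semidefinite. -/
def Linner (L : Matrix ι ι ℝ) (X Y : Matrix ι κ ℝ) : ℝ :=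
  (Xᵀ * L * Y).trace

theorem Linner_self_nonneg (hA : A.PosSemidef) (X : Matrix ι κ ℝ) : 0 ≤ Linner A X X := by
  simpa only [Linner, conjTranspose_eq_transpose_of_trivial] using
    (hA.conjTranspose_mul_mul_same X).trace_nonneg

theorem Linner_comm (hA : A.IsHermitian) (X Y : Matrix ι κ ℝ) : Linner A X Y = Linner A Y X := by
  have hAt : Aᵀ = A := by rw [← conjTranspose_eq_transpose_of_trivial, hA.eq]
  rw [Linner, ← trace_transpose, Linner, transpose_mul, transpose_mul, hAt, transpose_transpose,
    Matrix.mul_assoc]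

theorem Linner_sub_self (hA : A.IsHermitian) (X Y : Matrix ι κ ℝ) :
    Linner A (X - Y) (X - Y) = Linner A X X - 2 * Linner A X Y + Linner A Y Y := by
  have expand : Linner A (X - Y) (X - Y)
      = Linner A X X - Linner A X Y - (Linner A Y X - Linner A Y Y) := by
    simp only [Linner, transpose_sub, Matrix.sub_mul, Matrix.mul_sub, trace_sub]
    ring
  rw [expand, Linner_comm hA Y X]
  ring

theorem Linner_smul_right (A : Matrix ι ι ℝ) (a : ℝ) (X Y : Matrix ι κ ℝ) :
    Linner A X (a • Y) = a * Linner A X Y := by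
  simp only [Linner, Matrix.mul_smul, trace_smul, smul_eq_mul]

theorem Linner_smul_left (A : Matrix ι ι ℝ) (a : ℝ) (X Y : Matrix ι κ ℝ) :
    Linner A (a • X) Y = a * Linner A X Y := by
  simp only [Linner, transpose_smul, Matrix.smul_mul, trace_smul, smul_eq_mul]

theorem Linner_congr_of_mul_eq (hXY : A * X = B * Y) (Z : Matrix ι κ ℝ) :
    Linner A Z X = Linner B Z Y := by
  rw [Linner, Linner, Matrix.mul_assoc, hXY, Matrix.mul_assoc]

theorem Linner_self_le_of_posSemidef_smul_sub (h : (a • B - A).PosSemidef) (X : Matrix ι κ ℝ) :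
    Linner A X X ≤ a * Linner B X X := by
  have hnonneg := Linner_self_nonneg h X
  simp only [Linner, Matrix.mul_sub, Matrix.sub_mul, trace_sub, Matrix.mul_smul, Matrix.smul_mul,
    trace_smul, smul_eq_mul] at hnonneg
  exact sub_nonneg.mp hnonneg

-- For invertible matrices this says that `B ⪯ a A` implies `A⁻¹ ⪯ a B⁻¹`.
theorem Linner_self_le_of_posSemidef_smul_sub_of_mul_eq (ha : 0 < a) (hB : B.PosSemidef)
    (h : (a • A - B).PosSemidef) (hXY : A * X = B * Y) :
    Linner A X X ≤ a * Linner B Y Y := by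
  have hcross : Linner B X Y = Linner A X X := (Linner_congr_of_mul_eq hXY X).symm
  have hupper : Linner B X X ≤ a * Linner A X X := Linner_self_le_of_posSemidef_smul_sub h X
  have hsquare : 0 ≤ Linner B X X - 2 * (a * Linner A X X) + a * (a * Linner B Y Y) := by
    simpa only [Linner_sub_self hB.isHermitian, Linner_smul_left, Linner_smul_right, hcross] using
      Linner_self_nonneg hB (X - a • Y)
  exact le_of_mul_le_mul_left (by linarith) ha

end Linner

namespace SpecApprox

variable {ι κ : Type*} [Fintype ι] [Fintype κ] {ε : ℝ} {A B C D : Matrix ι ι ℝ}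

theorem refl (hε : 0 ≤ ε) (hA : A.PosSemidef) : SpecApprox ε A A := by
  have hlower : 0 ≤ 1 - Real.exp (-ε) := sub_nonneg.mpr (Real.exp_le_one_iff.mpr (by linarith))
  have hupper : 0 ≤ Real.exp ε - 1 := sub_nonneg.mpr (Real.one_le_exp hε)
  constructor
  · simpa only [sub_smul, one_smul] using hA.smul hlower
  · simpa only [sub_smul, one_smul] using hA.smul hupper

theorem symm (h : SpecApprox ε A B) : SpecApprox ε B A := by
  have hlower := h.2.smul (Real.exp_pos (-ε)).le
  have hupper := h.1.smul (Real.exp_pos ε).le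
  rw [smul_sub, smul_smul, ← Real.exp_add] at hlower hupper
  rw [neg_add_cancel, Real.exp_zero, one_smul] at hlower
  rw [add_neg_cancel, Real.exp_zero, one_smul] at hupper
  exact ⟨hlower, hupper⟩

theorem add (hAB : SpecApprox ε A B) (hCD : SpecApprox ε C D) : SpecApprox ε (A + C) (B + D) := by
  constructor
  · simpa only [smul_add, add_sub_add_comm] using hAB.1.add hCD.1
  · simpa only [smul_add, add_sub_add_comm] using hAB.2.add hCD.2

theorem transpose_mul_mul_same (h : SpecApprox ε A B) (P : Matrix ι κ ℝ) :
    SpecApprox ε (Pᵀ * A * P) (Pᵀ * B * P) := by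
  constructor
  · simpa only [conjTranspose_eq_transpose_of_trivial, Matrix.mul_sub, Matrix.sub_mul,
      Matrix.mul_smul, Matrix.smul_mul] using h.1.conjTranspose_mul_mul_same P
  · simpa only [conjTranspose_eq_transpose_of_trivial, Matrix.mul_sub, Matrix.sub_mul,
      Matrix.mul_smul, Matrix.smul_mul] using h.2.conjTranspose_mul_mul_same P

theorem posSemidef_right (h : SpecApprox ε A B) (hA : A.PosSemidef) : B.PosSemidef := by
  simpa only [sub_add_cancel] using h.symm.1.add (hA.smul (Real.exp_pos (-ε)).le)

theorem Linner_self_le (h : SpecApprox ε A B) (X : Matrix ι κ ℝ) :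
    Linner A X X ≤ Real.exp ε * Linner B X X :=
  Linner_self_le_of_posSemidef_smul_sub h.2 X

theorem Linner_self_le_of_mul_eq (h : SpecApprox ε A B) (hB : B.PosSemidef) {X Y : Matrix ι κ ℝ}
    (hXY : A * X = B * Y) : Linner A X X ≤ Real.exp ε * Linner B Y Y :=
  Linner_self_le_of_posSemidef_smul_sub_of_mul_eq (Real.exp_pos ε) hB h.symm.2 hXY

theorem Linner_sub_self_le (h : SpecApprox ε A B) (hA : A.PosSemidef) {X Y : Matrix ι κ ℝ}
    (hXY : A * X = B * Y) :
    Linner A (Y - X) (Y - X)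
      ≤ (1 + Real.exp (2 * ε) - 2 * Real.exp (-ε)) * Linner A X X := by
  have hlower : Real.exp (-ε) * Linner A X X ≤ Linner B Y Y := by
    rw [Real.exp_neg, inv_mul_le_iff₀ (Real.exp_pos ε)]
    exact h.Linner_self_le_of_mul_eq (h.posSemidef_right hA) hXY
  have hupper : Linner A Y Y ≤ Real.exp (2 * ε) * Linner A X X := calc
    Linner A Y Y ≤ Real.exp ε * Linner B Y Y := h.Linner_self_le Y
    _ ≤ Real.exp ε * (Real.exp ε * Linner A X X) := by
      gcongr
      exact h.symm.Linner_self_le_of_mul_eq hA hXY.symm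
    _ = Real.exp (2 * ε) * Linner A X X := by rw [← mul_assoc, ← Real.exp_add, ← two_mul]
  calc
    Linner A (Y - X) (Y - X) = Linner A Y Y - 2 * Linner B Y Y + Linner A X X := by
      rw [Linner_sub_self hA.isHermitian, Linner_congr_of_mul_eq hXY]
    _ ≤ (1 + Real.exp (2 * ε) - 2 * Real.exp (-ε)) * Linner A X X := by linarith

theorem Lnorm_sub_le (h : SpecApprox ε A B) (hA : A.PosSemidef) {X Y : Matrix ι κ ℝ}
    (hXY : A * X = B * Y) : Lnorm A (Y - X) ≤ cEps ε * Lnorm A X := by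
  have hX : 0 ≤ (Xᵀ * A * X).trace := Linner_self_nonneg hA X
  rw [Lnorm, Lnorm, cEps, ← Real.sqrt_mul' _ hX]
  exact Real.sqrt_le_sqrt (h.Linner_sub_self_le hA hXY)

end SpecApprox

section Blocks

variable {m n : Type*} {ε : ℝ} {A : Matrix m m ℝ} {B : Matrix m n ℝ} {C : Matrix n m ℝ}

theorem fromBlocks_add_transpose_fromCols_mul_mul [Fintype n] [DecidableEq n]
    (K S : Matrix n n ℝ) :
    fromBlocks A B C K + (fromCols 0 (1 : Matrix n n ℝ))ᵀ * S * fromCols 0 (1 : Matrix n n ℝ)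
      = fromBlocks A B C (S + K) := by
  rw [transpose_fromCols, fromRows_mul, fromRows_mul_fromCols, fromBlocks_add]
  simp [add_comm]

theorem SpecApprox.fromBlocks_add [Fintype m] [Fintype n] {K S T : Matrix n n ℝ}
    (hε : 0 ≤ ε) (hK : (fromBlocks A B C K).PosSemidef) (h : SpecApprox ε S T) :
    SpecApprox ε (fromBlocks A B C (S + K)) (fromBlocks A B C (T + K)) := by
  classical
  simpa only [fromBlocks_add_transpose_fromCols_mul_mul] using
    (SpecApprox.refl hε hK).add (h.transpose_mul_mul_same (fromCols 0 (1 : Matrix n n ℝ)))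

theorem posSemidef_fromBlocks_mul_inv_mul [Fintype m] [DecidableEq m] [Finite n] (hA : A.PosDef)
    (B : Matrix m n ℝ) :
    (fromBlocks A B Bᵀ (Bᵀ * A⁻¹ * B)).PosSemidef := by
  have : Invertible A := hA.isUnit.invertible
  rw [← conjTranspose_eq_transpose_of_trivial, PosDef.fromBlocks₁₁ B _ hA, sub_self]
  exact PosSemidef.zero

theorem stmt0_general [Fintype m] [DecidableEq m] [Fintype n] {D T : Matrix n n ℝ}
    (hε : 0 ≤ ε) (hL : (fromBlocks A B Bᵀ D).PosSemidef) (hA : IsUnit A)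
    (h : SpecApprox ε (D - Bᵀ * A⁻¹ * B) T) :
    SpecApprox ε (fromBlocks A B Bᵀ D) (fromBlocks A B Bᵀ (T + Bᵀ * A⁻¹ * B)) ∧
      ∀ {κ : Type*} [Fintype κ] (X Y : Matrix (m ⊕ n) κ ℝ),
        fromBlocks A B Bᵀ D * X = fromBlocks A B Bᵀ (T + Bᵀ * A⁻¹ * B) * Y →
        Lnorm (fromBlocks A B Bᵀ D) (Y - X)
          ≤ cEps ε * Lnorm (fromBlocks A B Bᵀ D) X := by
  have hApsd : A.PosSemidef := hL.submatrix Sum.inl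
  have hK := posSemidef_fromBlocks_mul_inv_mul (hApsd.posDef_iff_isUnit.mpr hA) B
  have happrox : SpecApprox ε (fromBlocks A B Bᵀ D) (fromBlocks A B Bᵀ (T + Bᵀ * A⁻¹ * B)) := by
    simpa only [sub_add_cancel] using h.fromBlocks_add hε hK
  exact ⟨happrox, fun X Y hXY => happrox.Lnorm_sub_le hL hXY⟩

end Blocks

/-- Sparsified-Schur-complement approximation of a block PSD matrix:
`L̃` obtained by replacing the Schur complement `S` of `L_ff` with an `ε`-approximation `S̃`
satisfies `L ≈_ε L̃`, and any solutions of `L X⋆ = B`, `L̃ X̃ = B` satisfy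
`‖X̃ − X⋆‖_L ≤ c(ε) ‖X⋆‖_L`. -/
theorem stmt0 {f c : ℕ}
    (Lff : Matrix (Fin f) (Fin f) ℝ) (Lfc : Matrix (Fin f) (Fin c) ℝ)
    (Lcf : Matrix (Fin c) (Fin f) ℝ) (Lcc : Matrix (Fin c) (Fin c) ℝ)
    (L : Matrix (Fin f ⊕ Fin c) (Fin f ⊕ Fin c) ℝ)
    (hL : L = Matrix.fromBlocks Lff Lfc Lcf Lcc)
    (hLsymm : L.IsSymm) (hLpsd : L.PosSemidef)
    (hLcf : Lcf = Lfcᵀ)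
    (hLff : IsUnit Lff)
    (S : Matrix (Fin c) (Fin c) ℝ)
    (hS : S = Lcc - Lcf * Lff⁻¹ * Lfc)
    (ε : ℝ) (hε : 0 < ε)
    (Stilde : Matrix (Fin c) (Fin c) ℝ) (hStildeSymm : Stilde.IsSymm)
    (hApprox : SpecApprox ε S Stilde)
    (Ltilde : Matrix (Fin f ⊕ Fin c) (Fin f ⊕ Fin c) ℝ)
    (hLtilde : Ltilde = Matrix.fromBlocks Lff Lfc Lcf (Stilde + Lcf * Lff⁻¹ * Lfc)) :
    SpecApprox ε L Ltilde ∧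
      ∀ (p : ℕ) (B Xstar Xtilde : Matrix (Fin f ⊕ Fin c) (Fin p) ℝ),
        L * Xstar = B → Ltilde * Xtilde = B →
        Lnorm L (Xtilde - Xstar) ≤ cEps ε * Lnorm L Xstar := by
  subst hL hLcf hS hLtilde
  obtain ⟨happrox, herror⟩ := stmt0_general hε.le hLpsd hLff hApprox
  exact ⟨happrox, fun _ _ X Y hX hY => herror X Y (hX.trans hY.symm)⟩
end

section
/- Let L and L̃ be real symmetric positive semidefinite n×n matrices with L ≈_ε L̃ for some ε > 0. Let B be a real n×p matrix each of whose columns lies in the column space of L. Let X⋆ and X̃ be real n×p matrices such that L·X⋆ = B and L̃·X̃ = B. Then ‖X⋆ − X̃‖_L ≤ c(ε)·‖X⋆‖_L, where c(ε) := sqrt(1 + e^{2ε} − 2e^{−ε}). -/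
/-!
For symmetric `L` and `M` with `L X = M Y`, moving the common value `L X = M Y` across the forms
gives `⟨X, Y⟩_L = ‖Y‖²_M`, hence `‖X - Y‖²_L = ‖X‖²_L - 2 ‖Y‖²_M + ‖Y‖²_L`.
If `α M ⪯ L ⪯ β M`, the last term is at most `β ‖Y‖²_M`. For invertible matrices `‖X‖²_L` and
`‖Y‖²_M` are the `L⁻¹`- and `M⁻¹`-energies of one right-hand side, so inversion being antitone
suggests `α ‖X‖²_L ≤ ‖Y‖²_M ≤ β ‖X‖²_L`. In general the lower bound comes from
expanding `0 ≤ ‖Y - α X‖²_M` and the upper one from `0 ≤ ‖X - β⁻¹ Y‖²_L`, so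
`‖X - Y‖²_L ≤ (1 + β² - 2 α) ‖X‖²_L`; the theorem is the case `α = e^{-ε}`, `β = e^ε`.
-/

open Matrix

theorem posSemidef_of_posSemidef_sub_smul {ι R : Type*} [CommRing R] [PartialOrder R]
    [StarRing R] [StarOrderedRing R] {A B : Matrix ι ι R} {c : R} (hc : 0 ≤ c)
    (hA : A.PosSemidef) (h : (B - c • A).PosSemidef) : B.PosSemidef := by
  simpa only [sub_add_cancel] using h.add (hA.smul hc)

section EnergyForm

variable {ι κ R : Type*} [Fintype ι] [Fintype κ]

/-- The bilinear form `⟨X, Y⟩_A = trace(Xᵀ A Y)` on `ι × κ` matrices, through which `L`-norms are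
compared: for a real positive semidefinite `A` its diagonal is the square of `Lnorm A`. -/
def energyForm [CommSemiring R] (A : Matrix ι ι R) (X Y : Matrix ι κ R) : R :=
  (Xᵀ * A * Y).trace

theorem energyForm_comm [CommSemiring R] {A : Matrix ι ι R} (hA : A.IsSymm)
    (X Y : Matrix ι κ R) : energyForm A X Y = energyForm A Y X := by
  rw [energyForm, ← trace_transpose, transpose_mul, transpose_mul, transpose_transpose, hA.eq,
    ← Matrix.mul_assoc, energyForm]

theorem energyForm_eq_self_of_mul_eq_mul [CommSemiring R] {A B : Matrix ι ι R} (hA : A.IsSymm)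
    {X Y : Matrix ι κ R} (h : A * X = B * Y) : energyForm A X Y = energyForm B Y Y := by
  rw [energyForm_comm hA, energyForm, energyForm, Matrix.mul_assoc, h, ← Matrix.mul_assoc]

theorem energyForm_sub_smul_self [CommRing R] {A : Matrix ι ι R} (hA : A.IsSymm)
    (X Y : Matrix ι κ R) (c : R) :
    energyForm A (X - c • Y) (X - c • Y) =
      energyForm A X X - 2 * c * energyForm A X Y + c ^ 2 * energyForm A Y Y := by
  have expand : energyForm A (X - c • Y) (X - c • Y) =
      energyForm A X X - c * energyForm A X Y - c * energyForm A Y X +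
        c ^ 2 * energyForm A Y Y := by
    simp only [energyForm, transpose_sub, transpose_smul, Matrix.sub_mul, Matrix.mul_sub,
      Matrix.smul_mul, Matrix.mul_smul, trace_sub, trace_smul, smul_eq_mul]
    ring
  rw [expand, energyForm_comm hA Y X]
  ring

theorem energyForm_self_nonneg {A : Matrix ι ι ℝ} (hA : A.PosSemidef) (X : Matrix ι κ ℝ) :
    0 ≤ energyForm A X X := by
  simpa only [energyForm, conjTranspose_eq_transpose_of_trivial] using
    (hA.conjTranspose_mul_mul_same X).trace_nonneg

theorem mul_energyForm_self_le_of_posSemidef_sub_smul {A B : Matrix ι ι ℝ} {c : ℝ}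
    (h : (B - c • A).PosSemidef) (X : Matrix ι κ ℝ) : c * energyForm A X X ≤ energyForm B X X := by
  have nonneg := energyForm_self_nonneg h X
  simp only [energyForm, Matrix.mul_sub, Matrix.sub_mul, Matrix.mul_smul, Matrix.smul_mul,
    trace_sub, trace_smul, smul_eq_mul] at nonneg
  exact sub_nonneg.mp nonneg

theorem mul_energyForm_self_le_of_mul_eq_mul {A B : Matrix ι ι ℝ} {c : ℝ} (hc : 0 ≤ c)
    (hA : A.PosSemidef) (hAB : (B - c • A).PosSemidef) {X Y : Matrix ι κ ℝ}
    (hXY : A * X = B * Y) : c * energyForm B Y Y ≤ energyForm A X X := by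
  have hsymm : A.IsSymm := isHermitian_iff_isSymm.mp hA.isHermitian
  have cross : energyForm A X Y = energyForm B Y Y :=
    energyForm_eq_self_of_mul_eq_mul hsymm hXY
  have square : 0 ≤ energyForm A X X - 2 * c * energyForm B Y Y + c ^ 2 * energyForm A Y Y := by
    rw [← cross, ← energyForm_sub_smul_self hsymm]
    exact energyForm_self_nonneg hA _
  have dominated : c ^ 2 * energyForm A Y Y ≤ c * energyForm B Y Y := by
    rw [sq, mul_assoc]
    exact mul_le_mul_of_nonneg_left (mul_energyForm_self_le_of_posSemidef_sub_smul hAB Y) hc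
  linarith

theorem energyForm_sub_self_le_of_mul_eq_mul {L M : Matrix ι ι ℝ} {α β : ℝ} (hα : 0 ≤ α)
    (hβ : 0 < β) (hM : M.PosSemidef) (hlower : (L - α • M).PosSemidef)
    (hupper : (β • M - L).PosSemidef) {X Y : Matrix ι κ ℝ} (hXY : L * X = M * Y) :
    energyForm L (X - Y) (X - Y) ≤ (1 + β ^ 2 - 2 * α) * energyForm L X X := by
  have hL : L.PosSemidef := posSemidef_of_posSemidef_sub_smul hα hM hlower
  have hupper' : (M - β⁻¹ • L).PosSemidef := by
    simpa only [smul_sub, inv_smul_smul₀ hβ.ne'] using hupper.smul (inv_nonneg.mpr hβ.le)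
  have hsymm : L.IsSymm := isHermitian_iff_isSymm.mp hL.isHermitian
  have cross : energyForm L X Y = energyForm M Y Y :=
    energyForm_eq_self_of_mul_eq_mul hsymm hXY
  have energy_ge : α * energyForm L X X ≤ energyForm M Y Y :=
    mul_energyForm_self_le_of_mul_eq_mul hα hM hlower hXY.symm
  have energy_le : energyForm M Y Y ≤ β * energyForm L X X :=
    (inv_mul_le_iff₀ hβ).mp <|
      mul_energyForm_self_le_of_mul_eq_mul (inv_nonneg.mpr hβ.le) hL hupper' hXY
  have norm_le : energyForm L Y Y ≤ β * energyForm M Y Y :=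
    (inv_mul_le_iff₀ hβ).mp <| mul_energyForm_self_le_of_posSemidef_sub_smul hupper' Y
  calc energyForm L (X - Y) (X - Y)
      = energyForm L X X - 2 * energyForm M Y Y + energyForm L Y Y := by
        simpa only [one_smul, mul_one, one_pow, one_mul, cross] using
          energyForm_sub_smul_self hsymm X Y 1
    _ ≤ energyForm L X X - 2 * (α * energyForm L X X) + β * (β * energyForm L X X) := by
        gcongr
        exact norm_le.trans (mul_le_mul_of_nonneg_left energy_le hβ.le)
    _ = (1 + β ^ 2 - 2 * α) * energyForm L X X := by ring

theorem stmt1_general {L M : Matrix ι ι ℝ} {α β : ℝ} (hα : 0 ≤ α) (hβ : 0 < β)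
    (hM : M.PosSemidef) (hlower : (L - α • M).PosSemidef) (hupper : (β • M - L).PosSemidef)
    {X Y : Matrix ι κ ℝ} (hXY : L * X = M * Y) :
    Lnorm L (X - Y) ≤ √(1 + β ^ 2 - 2 * α) * Lnorm L X := by
  have hL : L.PosSemidef := posSemidef_of_posSemidef_sub_smul hα hM hlower
  have hsq := energyForm_sub_self_le_of_mul_eq_mul hα hβ hM hlower hupper hXY
  calc Lnorm L (X - Y)
      ≤ √((1 + β ^ 2 - 2 * α) * energyForm L X X) := Real.sqrt_le_sqrt hsq
    _ = √(1 + β ^ 2 - 2 * α) * Lnorm L X := Real.sqrt_mul' _ (energyForm_self_nonneg hL X)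

end EnergyForm

/-- If `L ≈_ε L̃` (both symmetric PSD), each column of `B` is in the
column space of `L`, `L X⋆ = B` and `L̃ X̃ = B`, then `‖X⋆ − X̃‖_L ≤ c(ε) ‖X⋆‖_L`. -/
theorem stmt1 {n p : ℕ} (ε : ℝ) (hε : 0 < ε)
    (L Ltilde : Matrix (Fin n) (Fin n) ℝ)
    (hL : L.PosSemidef) (hLt : Ltilde.PosSemidef)
    (hApprox : SpecApprox ε L Ltilde)
    (B Xstar Xtilde : Matrix (Fin n) (Fin p) ℝ)
    (hB : ∀ j : Fin p, ∃ y : Fin n → ℝ, L *ᵥ y = fun i => B i j)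
    (hXstar : L * Xstar = B) (hXtilde : Ltilde * Xtilde = B) :
    Lnorm L (Xstar - Xtilde) ≤ cEps ε * Lnorm L Xstar := by
  simpa only [cEps, two_mul ε, Real.exp_add, sq] using
    stmt1_general (Real.exp_pos (-ε)).le (Real.exp_pos ε) hLt hApprox.1 hApprox.2
      (hXstar.trans hXtilde.symm)
end

section
/- Let L and L̃ be real symmetric positive semidefinite n×n matrices with L ≈_ε L̃ for some ε > 0, let B be a real n×d matrix, and let M⋆ be a real n×d matrix with L·M⋆ = B. Let (M^k)_{k≥0} and (D^k)_{k≥0} be sequences of real n×d matrices such that M^0 = 0, L̃·D^k = B − L·M^k for every k, and M^{k+1} = M^k + D^k for every k. Then for every k ≥ 0, ‖M^k − M⋆‖_L ≤ c(ε)^k · ‖M⋆‖_L, where c(ε) := sqrt(1 + e^{2ε} − 2e^{−ε}). -/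
open Matrix

/-!
With `p` and `q` the trace forms of `L` and `L̃`, the correction `y` of an error `x` satisfies
`q(·, y) = -p(·, x)`. Hence the new error has `p(x + y, x + y) = p(x, x) + p(y, y) - 2 q(y, y)`.
Cauchy–Schwarz for `q`, with `a q ≤ p`, gives `a p(x, x) ≤ q(y, y)`; Cauchy–Schwarz for `p`, with
`p ≤ b q`, gives `p(y, y) ≤ b² p(x, x)`. Thus each step multiplies the squared norm of the error
by at most `1 + b² - 2a`, which is `c(ε)²` for `a = e^{-ε}` and `b = e^{ε}`.
-/

open LinearMap (BilinForm)

section BilinForm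

variable {R V : Type*} [CommRing R] [LinearOrder R] [IsStrictOrderedRing R]
  [AddCommGroup V] [Module R V] {p q : BilinForm R V} {a b : R} {x y : V}

lemma mul_apply_self_le_of_apply_eq_neg (hq : q.IsPosSemidef) (hpx : 0 ≤ p x x)
    (hlower : a * q x x ≤ p x x) (hxy : q x y = -p x x) : a * p x x ≤ q y y := by
  have hqy : 0 ≤ q y y := hq.nonneg y
  have cauchySchwarz : p x x ^ 2 ≤ q x x * q y y := by
    simpa only [hxy, neg_sq] using
      q.apply_sq_le_of_symm hq.nonneg (BilinForm.isSymm_iff.mp hq.isSymm) x y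
  rcases le_or_gt a 0 with ha_nonpos | ha_pos
  · exact (mul_nonpos_of_nonpos_of_nonneg ha_nonpos hpx).trans hqy
  rcases hpx.eq_or_lt' with hpx_zero | hpx_pos
  · simpa only [hpx_zero, mul_zero] using hqy
  refine le_of_mul_le_mul_left ?_ hpx_pos
  calc p x x * (a * p x x) = a * p x x ^ 2 := by ring
    _ ≤ a * (q x x * q y y) := by gcongr
    _ = a * q x x * q y y := by ring
    _ ≤ p x x * q y y := by gcongr

lemma apply_self_le_sq_mul_of_apply_eq_neg (hp : p.IsPosSemidef)
    (hupper : p y y ≤ b * q y y) (hxy : p x y = -q y y) : p y y ≤ b ^ 2 * p x x := by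
  have hpx : 0 ≤ p x x := hp.nonneg x
  have cauchySchwarz : q y y ^ 2 ≤ p x x * p y y := by
    simpa only [hxy, neg_sq] using
      p.apply_sq_le_of_symm hp.nonneg (BilinForm.isSymm_iff.mp hp.isSymm) x y
  rcases (hp.nonneg y).eq_or_lt' with hpy_zero | hpy_pos
  · rw [hpy_zero]
    positivity
  refine le_of_mul_le_mul_right ?_ hpy_pos
  calc p y y * p y y = p y y ^ 2 := by ring
    _ ≤ (b * q y y) ^ 2 := by gcongr
    _ = b ^ 2 * q y y ^ 2 := by ring
    _ ≤ b ^ 2 * (p x x * p y y) := by gcongr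
    _ = b ^ 2 * p x x * p y y := by ring

lemma apply_add_self_le_of_apply_eq_neg (hp : p.IsPosSemidef) (hq : q.IsPosSemidef)
    (hlower : a * q x x ≤ p x x) (hupper : p y y ≤ b * q y y)
    (hxy : ∀ z, q z y = -p z x) :
    p (x + y) (x + y) ≤ (1 + b ^ 2 - 2 * a) * p x x := by
  have hpxy : p x y = -q y y := by rw [hxy, neg_neg, hp.isSymm.eq]
  have hy_lower : a * p x x ≤ q y y :=
    mul_apply_self_le_of_apply_eq_neg hq (hp.nonneg x) hlower (hxy x)
  have hy_upper : p y y ≤ b ^ 2 * p x x := apply_self_le_sq_mul_of_apply_eq_neg hp hupper hpxy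
  calc p (x + y) (x + y) = p x x + p x y + (p x y + p y y) := by
        simp only [map_add, LinearMap.add_apply, hp.isSymm.eq y x]
    _ = p x x + p y y - 2 * q y y := by rw [hpxy]; ring
    _ ≤ (1 + b ^ 2 - 2 * a) * p x x := by linarith

end BilinForm

section TraceForm

variable {ι κ R : Type*} [Fintype ι] [Fintype κ] [CommRing R]

/-- The bilinear form `(X, Y) ↦ trace (Xᵀ A Y)` on rectangular matrices, whose quadratic form is
the square of `Lnorm A` when `A` is positive semidefinite. -/
def traceForm (A : Matrix ι ι R) : BilinForm R (Matrix ι κ R) :=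
  LinearMap.mk₂ R (fun X Y ↦ (Xᵀ * A * Y).trace)
    (by simp [Matrix.add_mul]) (by simp) (by simp [Matrix.mul_add]) (by simp)

lemma traceForm_apply (A : Matrix ι ι R) (X Y : Matrix ι κ R) :
    traceForm A X Y = (Xᵀ * A * Y).trace :=
  rfl

lemma traceForm_smul (a : R) (A : Matrix ι ι R) (X Y : Matrix ι κ R) :
    traceForm (a • A) X Y = a * traceForm A X Y := by
  simp only [traceForm_apply, Matrix.mul_smul, Matrix.smul_mul, trace_smul, smul_eq_mul]

variable {A B L T : Matrix ι ι ℝ} {a b : ℝ} {X Y : Matrix ι κ ℝ}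

lemma isPosSemidef_traceForm (hA : A.PosSemidef) :
    (traceForm A : BilinForm ℝ (Matrix ι κ ℝ)).IsPosSemidef where
  eq X Y := by
    have hA_symm : Aᵀ = A := hA.isHermitian.eq
    rw [traceForm_apply, ← trace_transpose]
    simp only [transpose_mul, transpose_transpose, hA_symm, traceForm_apply, Matrix.mul_assoc]
  nonneg X := (hA.conjTranspose_mul_mul_same X).trace_nonneg

lemma traceForm_self_le (hAB : (B - A).PosSemidef) (X : Matrix ι κ ℝ) :
    traceForm A X X ≤ traceForm B X X := by
  have h : 0 ≤ traceForm (B - A) X X := (isPosSemidef_traceForm hAB).nonneg X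
  simpa only [traceForm_apply, Matrix.mul_sub, Matrix.sub_mul, trace_sub, sub_nonneg] using h

lemma Lnorm_neg (L : Matrix ι ι ℝ) (X : Matrix ι κ ℝ) : Lnorm L (-X) = Lnorm L X := by
  simp [Lnorm]

lemma Lnorm_add_le_of_mul_eq_neg_mul (hL : L.PosSemidef) (hT : T.PosSemidef) (hab : a ≤ b)
    (hlower : (L - a • T).PosSemidef) (hupper : (b • T - L).PosSemidef)
    (hXY : T * Y = -(L * X)) :
    Lnorm L (X + Y) ≤ √(1 + b ^ 2 - 2 * a) * Lnorm L X := by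
  have hc : 0 ≤ 1 + b ^ 2 - 2 * a := by linarith [sq_nonneg (b - 1)]
  have hform : ∀ Z, traceForm T Z Y = -traceForm L Z X := fun Z ↦ by
    simp only [traceForm_apply, Matrix.mul_assoc, hXY, Matrix.mul_neg, trace_neg]
  have hsq : traceForm L (X + Y) (X + Y) ≤ (1 + b ^ 2 - 2 * a) * traceForm L X X :=
    apply_add_self_le_of_apply_eq_neg (isPosSemidef_traceForm hL) (isPosSemidef_traceForm hT)
      (by simpa only [traceForm_smul] using traceForm_self_le hlower X)
      (by simpa only [traceForm_smul] using traceForm_self_le hupper Y) hform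
  calc Lnorm L (X + Y) ≤ √((1 + b ^ 2 - 2 * a) * traceForm L X X) := Real.sqrt_le_sqrt hsq
    _ = √(1 + b ^ 2 - 2 * a) * Lnorm L X := Real.sqrt_mul hc _

end TraceForm

theorem stmt2_general {ι κ : Type*} [Fintype ι] [Fintype κ] {a b : ℝ} (hab : a ≤ b)
    {L T : Matrix ι ι ℝ} (hL : L.PosSemidef) (hT : T.PosSemidef)
    (hlower : (L - a • T).PosSemidef) (hupper : (b • T - L).PosSemidef)
    {B Mstar : Matrix ι κ ℝ} (hMstar : L * Mstar = B) {M D : ℕ → Matrix ι κ ℝ}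
    (hD : ∀ k, T * D k = B - L * M k) (hMsucc : ∀ k, M (k + 1) = M k + D k) (k : ℕ) :
    Lnorm L (M k - Mstar) ≤ √(1 + b ^ 2 - 2 * a) ^ k * Lnorm L (M 0 - Mstar) := by
  refine le_geom (u := fun j ↦ Lnorm L (M j - Mstar)) (Real.sqrt_nonneg _) k fun j _ ↦ ?_
  have hcorrection : T * D j = -(L * (M j - Mstar)) := by
    rw [hD, Matrix.mul_sub, hMstar, neg_sub]
  rw [hMsucc, add_sub_right_comm]
  exact Lnorm_add_le_of_mul_eq_neg_mul hL hT hab hlower hupper hcorrection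

/-- Iterative refinement with an `ε`-approximate matrix `L̃` converges
linearly: `‖M^k − M⋆‖_L ≤ c(ε)^k ‖M⋆‖_L`. -/
theorem stmt2 {n d : ℕ} (ε : ℝ) (hε : 0 < ε)
    (L Ltilde : Matrix (Fin n) (Fin n) ℝ)
    (hL : L.PosSemidef) (hLt : Ltilde.PosSemidef)
    (hApprox : SpecApprox ε L Ltilde)
    (B Mstar : Matrix (Fin n) (Fin d) ℝ) (hMstar : L * Mstar = B)
    (M D : ℕ → Matrix (Fin n) (Fin d) ℝ)
    (hM0 : M 0 = 0)
    (hD : ∀ k : ℕ, Ltilde * D k = B - L * M k)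
    (hMsucc : ∀ k : ℕ, M (k + 1) = M k + D k) :
    ∀ k : ℕ, Lnorm L (M k - Mstar) ≤ cEps ε ^ k * Lnorm L Mstar := by
  have hexp : Real.exp (-ε) ≤ Real.exp ε := Real.exp_le_exp.mpr (by linarith)
  simpa only [cEps, two_mul ε, Real.exp_add, ← sq, hM0, zero_sub, Lnorm_neg] using
    stmt2_general hexp hL hLt hApprox.1 hApprox.2 hMstar hD hMsucc
end

section
/- Let L and L̃ be real symmetric positive definite n×n matrices with L ≈_ε L̃ for some ε > 0, let b ∈ ℝⁿ, and let x⋆ := L⁻¹·b and x̃ := L̃⁻¹·b. Then (x⋆)ᵀ·L·x̃ ≥ e^{−ε} · (x⋆)ᵀ·L·x⋆. -/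
open Matrix

/-!
If `L x = M y` with `L` and `M` Hermitian, then `xᴴ L y = yᴴ M y`, and the mixed terms `xᴴ M y` and
`yᴴ M x` both equal `xᴴ L x`. Completing the square gives, for self-adjoint `c`,
`xᴴ L y - c xᴴ L x = (y - c x)ᴴ M (y - c x) + c xᴴ (L - c M) x`, and both summands are nonnegative
as soon as `M ⪰ 0`, `c ≥ 0` and `L ⪰ c M`. The theorem takes `M = L̃` and `c = e^{-ε}`.
-/

section CommRing

variable {ι R : Type*} [Fintype ι] [CommRing R]

theorem mulVec_eq_of_eq_inv_mulVec [DecidableEq ι] {A : Matrix ι ι R} (hA : IsUnit A)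
    {u b : ι → R} (hu : u = A⁻¹ *ᵥ b) : A *ᵥ u = b := by
  rw [hu, mulVec_mulVec, mul_nonsing_inv A ((isUnit_iff_isUnit_det A).mp hA), one_mulVec]

variable [StarRing R]

theorem star_mulVec_dotProduct_of_isHermitian {A : Matrix ι ι R} (hA : A.IsHermitian)
    (u v : ι → R) : star (A *ᵥ u) ⬝ᵥ v = star u ⬝ᵥ (A *ᵥ v) := by
  rw [star_mulVec, hA.eq, dotProduct_mulVec]

theorem dotProduct_mulVec_sub_eq_of_mulVec_eq {L M : Matrix ι ι R} (hL : L.IsHermitian)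
    (hM : M.IsHermitian) {c : R} (hc : IsSelfAdjoint c) {x y : ι → R} (hxy : L *ᵥ x = M *ᵥ y) :
    star x ⬝ᵥ (L *ᵥ y) - c * (star x ⬝ᵥ (L *ᵥ x)) =
      star (y - c • x) ⬝ᵥ (M *ᵥ (y - c • x)) + c * (star x ⬝ᵥ ((L - c • M) *ᵥ x)) := by
  have hxLy : star x ⬝ᵥ (L *ᵥ y) = star y ⬝ᵥ (M *ᵥ y) := by
    rw [← star_mulVec_dotProduct_of_isHermitian hL, hxy,
      star_mulVec_dotProduct_of_isHermitian hM]
  have hxMy : star x ⬝ᵥ (M *ᵥ y) = star x ⬝ᵥ (L *ᵥ x) := by rw [hxy]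
  have hyMx : star y ⬝ᵥ (M *ᵥ x) = star x ⬝ᵥ (L *ᵥ x) := by
    rw [← star_mulVec_dotProduct_of_isHermitian hM, ← hxy,
      star_mulVec_dotProduct_of_isHermitian hL]
  simp only [star_sub, star_smul, hc.star_eq, mulVec_sub, sub_mulVec, mulVec_smul, smul_mulVec,
    dotProduct_sub, sub_dotProduct, dotProduct_smul, smul_dotProduct, smul_eq_mul,
    hxLy, hxMy, hyMx]
  ring

end CommRing

theorem stmt15_general {ι R : Type*} [Fintype ι] [CommRing R] [PartialOrder R] [StarRing R]
    [StarOrderedRing R] {L M : Matrix ι ι R} {c : R} (hc : 0 ≤ c) (hM : M.PosSemidef)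
    (hLM : (L - c • M).PosSemidef) {x y : ι → R} (hxy : L *ᵥ x = M *ᵥ y) :
    c * (star x ⬝ᵥ (L *ᵥ x)) ≤ star x ⬝ᵥ (L *ᵥ y) := by
  have hc_star : IsSelfAdjoint c := .of_nonneg hc
  have hL : L.IsHermitian := by
    simpa only [sub_add_cancel] using hLM.isHermitian.add (hM.isHermitian.smul hc_star)
  rw [← sub_nonneg, dotProduct_mulVec_sub_eq_of_mulVec_eq hL hM.isHermitian hc_star hxy]
  exact add_nonneg (hM.dotProduct_mulVec_nonneg _)
    (smul_nonneg hc (hLM.dotProduct_mulVec_nonneg x))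

/-- For `x⋆ = L⁻¹ b`, `x̃ = L̃⁻¹ b` with `L ≈_ε L̃` positive definite,
`(x⋆)ᵀ L x̃ ≥ e^{−ε} (x⋆)ᵀ L x⋆`. -/
theorem stmt15 {n : ℕ} (ε : ℝ) (hε : 0 < ε)
    (L Ltilde : Matrix (Fin n) (Fin n) ℝ)
    (hL : L.PosDef) (hLt : Ltilde.PosDef)
    (hApprox : SpecApprox ε L Ltilde)
    (b xstar xtilde : Fin n → ℝ)
    (hxstar : xstar = L⁻¹ *ᵥ b) (hxtilde : xtilde = Ltilde⁻¹ *ᵥ b) :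
    Real.exp (-ε) * (xstar ⬝ᵥ (L *ᵥ xstar)) ≤ xstar ⬝ᵥ (L *ᵥ xtilde) := by
  exact stmt15_general (Real.exp_nonneg _) hLt.posSemidef hApprox.1 <|
    (mulVec_eq_of_eq_inv_mulVec hL.isUnit hxstar).trans
      (mulVec_eq_of_eq_inv_mulVec hLt.isUnit hxtilde).symm
end

section
/- Let L and L̃ be real symmetric positive definite n×n matrices with L ≈_ε L̃ for some ε > 0, let b ∈ ℝⁿ, and let x⋆ := L⁻¹·b and x̃ := L̃⁻¹·b. Then x̃ᵀ·L·x̃ ≤ e^{2ε} · (x⋆)ᵀ·L·x⋆. -/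
/-!
If `0 ≺ A ⪯ B` then `B⁻¹ ⪯ A⁻¹`, and in terms of the solutions of `A x = b = B y` this reads
`y* B y ≤ x* A x`; expanding `0 ≤ (y - x)* A (y - x)`, whose cross terms both equal `y* B y`, shows
it without inverting. Together with `y* A y ≤ y* B y` this compares the `A`-energies of `y` and `x`.
The theorem is the case `A = L`, `B = e^ε L̃`, `x = e^ε x⋆`, `y = x̃`: rescaling `x⋆` accounts for
the factor `e^{2ε}`.
-/

open Matrix

section HermitianForm

variable {ι R : Type*} [Fintype ι]

theorem star_dotProduct_mulVec_of_isHermitian [NonUnitalSemiring R] [StarRing R]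
    {A : Matrix ι ι R} (hA : A.IsHermitian) (x y : ι → R) :
    star x ⬝ᵥ (A *ᵥ y) = star (A *ᵥ x) ⬝ᵥ y := by
  rw [star_mulVec, hA.eq, dotProduct_mulVec]

theorem mulVec_inv_mulVec [DecidableEq ι] [CommRing R] {A : Matrix ι ι R}
    (hA : IsUnit A) (b : ι → R) : A *ᵥ (A⁻¹ *ᵥ b) = b := by
  rw [mulVec_mulVec, mul_nonsing_inv A ((isUnit_iff_isUnit_det A).1 hA), one_mulVec]

section OrderedRing

variable [Ring R] [PartialOrder R] [IsOrderedAddMonoid R] [StarRing R] {A B : Matrix ι ι R}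

theorem dotProduct_mulVec_le_of_posSemidef_sub (hAB : (B - A).PosSemidef) (x : ι → R) :
    star x ⬝ᵥ (A *ᵥ x) ≤ star x ⬝ᵥ (B *ᵥ x) := by
  simpa only [sub_mulVec, dotProduct_sub, sub_nonneg] using hAB.dotProduct_mulVec_nonneg x

theorem dotProduct_mulVec_add_le_of_posSemidef (hA : A.PosSemidef) (x y : ι → R) :
    star y ⬝ᵥ (A *ᵥ x) + star x ⬝ᵥ (A *ᵥ y) ≤ star y ⬝ᵥ (A *ᵥ y) + star x ⬝ᵥ (A *ᵥ x) := by
  have h := hA.dotProduct_mulVec_nonneg (y - x)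
  simp only [star_sub, mulVec_sub, dotProduct_sub, sub_dotProduct] at h
  rw [← sub_nonneg]
  convert h using 1
  abel

theorem dotProduct_mulVec_le_of_mulVec_eq_mulVec (hA : A.PosSemidef) (hAB : (B - A).PosSemidef)
    {x y : ι → R} (hxy : A *ᵥ x = B *ᵥ y) :
    star y ⬝ᵥ (B *ᵥ y) ≤ star x ⬝ᵥ (A *ᵥ x) := by
  have hB : B.IsHermitian := by
    simpa only [sub_add_cancel] using hAB.isHermitian.add hA.isHermitian
  have hcross : star x ⬝ᵥ (A *ᵥ y) = star y ⬝ᵥ (B *ᵥ y) := by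
    rw [star_dotProduct_mulVec_of_isHermitian hA.isHermitian, hxy,
      ← star_dotProduct_mulVec_of_isHermitian hB]
  refine le_of_add_le_add_left (a := star y ⬝ᵥ (B *ᵥ y)) ?_
  calc star y ⬝ᵥ (B *ᵥ y) + star y ⬝ᵥ (B *ᵥ y)
      = star y ⬝ᵥ (A *ᵥ x) + star x ⬝ᵥ (A *ᵥ y) := by rw [hcross, hxy]
    _ ≤ star y ⬝ᵥ (A *ᵥ y) + star x ⬝ᵥ (A *ᵥ x) := dotProduct_mulVec_add_le_of_posSemidef hA x y
    _ ≤ star y ⬝ᵥ (B *ᵥ y) + star x ⬝ᵥ (A *ᵥ x) := by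
      gcongr
      exact dotProduct_mulVec_le_of_posSemidef_sub hAB y

end OrderedRing

theorem stmt16_general [CommRing R] [PartialOrder R] [IsOrderedAddMonoid R] [StarRing R]
    {L M : Matrix ι ι R} {c : R} (hL : L.PosSemidef) (hLM : (c • M - L).PosSemidef)
    {b x y : ι → R} (hx : L *ᵥ x = b) (hy : M *ᵥ y = b) :
    star y ⬝ᵥ (L *ᵥ y) ≤ star c * c * (star x ⬝ᵥ (L *ᵥ x)) := by
  have hxy : L *ᵥ (c • x) = (c • M) *ᵥ y := by rw [mulVec_smul, smul_mulVec, hx, hy]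
  calc star y ⬝ᵥ (L *ᵥ y)
      ≤ star y ⬝ᵥ ((c • M) *ᵥ y) := dotProduct_mulVec_le_of_posSemidef_sub hLM y
    _ ≤ star (c • x) ⬝ᵥ (L *ᵥ (c • x)) := dotProduct_mulVec_le_of_mulVec_eq_mulVec hL hLM hxy
    _ = star c * c * (star x ⬝ᵥ (L *ᵥ x)) := by
      rw [star_smul, mulVec_smul, smul_dotProduct, dotProduct_smul, smul_eq_mul, smul_eq_mul,
        mul_assoc]

end HermitianForm

/-- For `x⋆ = L⁻¹ b`, `x̃ = L̃⁻¹ b` with `L ≈_ε L̃` positive definite,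
`x̃ᵀ L x̃ ≤ e^{2ε} (x⋆)ᵀ L x⋆`. -/
theorem stmt16 {n : ℕ} (ε : ℝ) (hε : 0 < ε)
    (L Ltilde : Matrix (Fin n) (Fin n) ℝ)
    (hL : L.PosDef) (hLt : Ltilde.PosDef)
    (hApprox : SpecApprox ε L Ltilde)
    (b xstar xtilde : Fin n → ℝ)
    (hxstar : xstar = L⁻¹ *ᵥ b) (hxtilde : xtilde = Ltilde⁻¹ *ᵥ b) :
    xtilde ⬝ᵥ (L *ᵥ xtilde) ≤ Real.exp (2 * ε) * (xstar ⬝ᵥ (L *ᵥ xstar)) := by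
  have h := stmt16_general hL.posSemidef hApprox.2
    (hxstar ▸ mulVec_inv_mulVec hL.isUnit b) (hxtilde ▸ mulVec_inv_mulVec hLt.isUnit b)
  simpa only [star_trivial, two_mul, Real.exp_add] using h
end

section
/- Let L and L̃ be real symmetric positive semidefinite n×n matrices with L ≈_ε L̃ for some ε > 0, let B be a real n×d matrix, let M⋆ be a real n×d matrix with L·M⋆ = B, let M be a real n×d matrix, and let D be a real n×d matrix with L̃·D = B − L·M. Then ‖(M + D) − M⋆‖_L ≤ c(ε)·‖M − M⋆‖_L, where c(ε) := sqrt(1 + e^{2ε} − 2e^{−ε}); i.e., one step of iterative refinement with the approximate matrix L̃ contracts the L-norm error by the factor c(ε). -/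
open Matrix

/-! Put `E = M − M⋆`, so that `L̃ D = −L E`, and let `t = ⟨D, L̃ D⟩ = −⟨E, L D⟩`, whence
`‖E + D‖_L² = ‖E‖_L² − 2 t + ‖D‖_L²`. Suppose `α L̃ ⪯ L ⪯ β L̃` with `α ≥ 0`. Nonnegativity of the
`L̃`-form at `D + α E` gives `α ‖E‖_L² ≤ t`, and nonnegativity of the `L`-form at `D + β E` gives
`‖D‖_L² ≤ β t ≤ β² ‖E‖_L²`. Hence the error contracts by `sqrt (1 + β² − 2 α)`, without any use of
a (pseudo)inverse of `L̃`; take `α = e^{-ε}` and `β = e^{ε}`. -/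

section BilinForm

variable {R V : Type*} [CommRing R] [AddCommGroup V] [Module R V] {B B' : LinearMap.BilinForm R V}

theorem bilinForm_add_self (hB : B.IsSymm) (x y : V) :
    B (x + y) (x + y) = B x x + 2 * B x y + B y y := by
  rw [LinearMap.BilinForm.add_left, LinearMap.BilinForm.add_right, LinearMap.BilinForm.add_right,
    hB.eq y x]
  ring

theorem bilinForm_add_smul_self (hB : B.IsSymm) (x y : V) (c : R) :
    B (x + c • y) (x + c • y) = B x x + 2 * c * B x y + c ^ 2 * B y y := by
  rw [bilinForm_add_self hB, LinearMap.BilinForm.smul_right, LinearMap.BilinForm.smul_left,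
    LinearMap.BilinForm.smul_right]
  ring

variable [LinearOrder R] [IsStrictOrderedRing R] {e d : V} {α β : R}

theorem mul_bilinForm_self_le_of_apply_eq_neg (hB' : B'.IsPosSemidef) (hα : 0 ≤ α)
    (hle : α * B' e e ≤ B e e) (hd : B' d = -B e) : α * B e e ≤ B' d d := by
  have hde : B' d e = -B e e := by rw [hd, LinearMap.neg_apply]
  have hnonneg : 0 ≤ B' d d + 2 * α * B' d e + α ^ 2 * B' e e := by
    rw [← bilinForm_add_smul_self hB'.isSymm]
    exact hB'.nonneg _
  have hscaled : α ^ 2 * B' e e ≤ α * B e e := by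
    rw [sq, mul_assoc]
    exact mul_le_mul_of_nonneg_left hle hα
  rw [hde] at hnonneg
  linarith

theorem bilinForm_self_le_sq_mul_of_apply_eq_neg (hB : B.IsPosSemidef)
    (hle : B d d ≤ β * B' d d) (hd : B' d = -B e) : B d d ≤ β ^ 2 * B e e := by
  have hde : B d e = -B' d d := by rw [hB.isSymm.eq, hd, LinearMap.neg_apply, neg_neg]
  have hnonneg : 0 ≤ B d d + 2 * β * B d e + β ^ 2 * B e e := by
    rw [← bilinForm_add_smul_self hB.isSymm]
    exact hB.nonneg _
  rw [hde] at hnonneg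
  linarith

theorem bilinForm_add_self_le_of_apply_eq_neg (hB : B.IsPosSemidef) (hB' : B'.IsPosSemidef)
    (hα : 0 ≤ α) (hlower : α * B' e e ≤ B e e) (hupper : B d d ≤ β * B' d d)
    (hd : B' d = -B e) : B (e + d) (e + d) ≤ (1 + β ^ 2 - 2 * α) * B e e := by
  have hed : B e d = -B' d d := by rw [hd, LinearMap.neg_apply, neg_neg]
  calc
    B (e + d) (e + d) = B e e - 2 * B' d d + B d d := by
      rw [bilinForm_add_self hB.isSymm, hed]
      ring
    _ ≤ B e e - 2 * (α * B e e) + β ^ 2 * B e e := by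
      gcongr
      · exact mul_bilinForm_self_le_of_apply_eq_neg hB' hα hlower hd
      · exact bilinForm_self_le_sq_mul_of_apply_eq_neg hB hupper hd
    _ = (1 + β ^ 2 - 2 * α) * B e e := by ring

end BilinForm

section WeightedTraceForm

variable {R ι κ : Type*} [CommRing R] [Fintype ι] [Fintype κ]

/-- The bilinear form `⟨X, Y⟩_L = trace (Xᵀ L Y)` on rectangular matrices, whose quadratic form is
the square of the `L`-norm when `L` is real positive semidefinite. -/
def weightedTraceForm (L : Matrix ι ι R) : LinearMap.BilinForm R (Matrix ι κ R) :=
  LinearMap.mk₂ R (fun X Y ↦ (Xᵀ * L * Y).trace)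
    (fun X₁ X₂ Y ↦ by rw [transpose_add, Matrix.add_mul, Matrix.add_mul, trace_add])
    (fun c X Y ↦ by rw [transpose_smul, Matrix.smul_mul, Matrix.smul_mul, trace_smul])
    (fun X Y₁ Y₂ ↦ by rw [Matrix.mul_add, trace_add])
    (fun c X Y ↦ by rw [Matrix.mul_smul, trace_smul])

theorem weightedTraceForm_apply (L : Matrix ι ι R) (X Y : Matrix ι κ R) :
    weightedTraceForm L X Y = (Xᵀ * L * Y).trace :=
  rfl

theorem weightedTraceForm_smul (c : R) (L : Matrix ι ι R) :
    weightedTraceForm (κ := κ) (c • L) = c • weightedTraceForm L := by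
  refine LinearMap.ext₂ fun X Y ↦ ?_
  simp only [weightedTraceForm_apply, LinearMap.smul_apply, Matrix.mul_smul, Matrix.smul_mul,
    trace_smul]

theorem weightedTraceForm_sub (L K : Matrix ι ι R) :
    weightedTraceForm (κ := κ) (L - K) = weightedTraceForm L - weightedTraceForm K := by
  refine LinearMap.ext₂ fun X Y ↦ ?_
  simp only [weightedTraceForm_apply, LinearMap.sub_apply, Matrix.mul_sub, Matrix.sub_mul,
    trace_sub]

theorem weightedTraceForm_apply_eq_trace_transpose_mul {L : Matrix ι ι R} (hL : L.IsSymm)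
    (X Y : Matrix ι κ R) : weightedTraceForm L X Y = ((L * X)ᵀ * Y).trace := by
  rw [weightedTraceForm_apply, transpose_mul, hL.eq]

theorem weightedTraceForm_isSymm {L : Matrix ι ι R} (hL : L.IsSymm) :
    (weightedTraceForm (κ := κ) L).IsSymm where
  eq X Y := by
    rw [weightedTraceForm_apply_eq_trace_transpose_mul hL, weightedTraceForm_apply,
      ← trace_transpose, transpose_mul, transpose_transpose, Matrix.mul_assoc]

theorem weightedTraceForm_eq_neg_of_mul_eq_neg {L K : Matrix ι ι R} (hL : L.IsSymm)
    (hK : K.IsSymm) {E D : Matrix ι κ R} (h : K * D = -(L * E)) :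
    weightedTraceForm K D = -weightedTraceForm L E := by
  ext1 Y
  rw [LinearMap.neg_apply, weightedTraceForm_apply_eq_trace_transpose_mul hK,
    weightedTraceForm_apply_eq_trace_transpose_mul hL, h, transpose_neg, Matrix.neg_mul, trace_neg]

variable [PartialOrder R] [StarRing R] [TrivialStar R] [AddLeftMono R]

theorem weightedTraceForm_isPosSemidef {L : Matrix ι ι R} (hL : L.PosSemidef) :
    (weightedTraceForm (κ := κ) L).IsPosSemidef where
  isSymm := weightedTraceForm_isSymm (isHermitian_iff_isSymm.mp hL.isHermitian)
  nonneg X := by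
    rw [weightedTraceForm_apply, ← conjTranspose_eq_transpose_of_trivial]
    exact (hL.conjTranspose_mul_mul_same X).trace_nonneg

theorem weightedTraceForm_self_le_of_posSemidef_sub {L K : Matrix ι ι R}
    (h : (K - L).PosSemidef) (X : Matrix ι κ R) :
    weightedTraceForm L X X ≤ weightedTraceForm K X X := by
  have hnonneg := (weightedTraceForm_isPosSemidef h).nonneg X
  rwa [weightedTraceForm_sub, LinearMap.sub_apply, LinearMap.sub_apply, sub_nonneg] at hnonneg

end WeightedTraceForm

theorem Lnorm_eq_sqrt_weightedTraceForm {ι κ : Type*} [Fintype ι] [Fintype κ]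
    (L : Matrix ι ι ℝ) (X : Matrix ι κ ℝ) : Lnorm L X = √(weightedTraceForm L X X) :=
  rfl

theorem stmt17_general {ι κ : Type*} [Fintype ι] [Fintype κ] {α β : ℝ} (hα : 0 ≤ α)
    {L Ltilde : Matrix ι ι ℝ} (hLt : Ltilde.PosSemidef)
    (hlower : (L - α • Ltilde).PosSemidef) (hupper : (β • Ltilde - L).PosSemidef)
    {B Mstar M D : Matrix ι κ ℝ} (hMstar : L * Mstar = B) (hD : Ltilde * D = B - L * M) :
    Lnorm L ((M + D) - Mstar) ≤ √(1 + β ^ 2 - 2 * α) * Lnorm L (M - Mstar) := by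
  have hL : L.PosSemidef := by
    simpa only [sub_add_cancel] using hlower.add (hLt.smul hα)
  have hLform := weightedTraceForm_isPosSemidef (κ := κ) hL
  have hLtform := weightedTraceForm_isPosSemidef (κ := κ) hLt
  have hresidual : Ltilde * D = -(L * (M - Mstar)) := by
    rw [hD, ← hMstar, Matrix.mul_sub, neg_sub]
  have hforms := weightedTraceForm_eq_neg_of_mul_eq_neg
    (isHermitian_iff_isSymm.mp hL.isHermitian) (isHermitian_iff_isSymm.mp hLt.isHermitian) hresidual
  have hlower_form := weightedTraceForm_self_le_of_posSemidef_sub hlower (M - Mstar)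
  have hupper_form := weightedTraceForm_self_le_of_posSemidef_sub hupper D
  rw [weightedTraceForm_smul] at hlower_form hupper_form
  rw [Lnorm_eq_sqrt_weightedTraceForm, Lnorm_eq_sqrt_weightedTraceForm,
    ← Real.sqrt_mul' _ (hLform.nonneg _), add_sub_right_comm]
  exact Real.sqrt_le_sqrt
    (bilinForm_add_self_le_of_apply_eq_neg hLform hLtform hα hlower_form hupper_form hforms)

/-- One step of iterative refinement with the approximate matrix `L̃`
contracts the `L`-norm error by the factor `c(ε)`. -/
theorem stmt17 {n d : ℕ} (ε : ℝ) (hε : 0 < ε)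
    (L Ltilde : Matrix (Fin n) (Fin n) ℝ)
    (hL : L.PosSemidef) (hLt : Ltilde.PosSemidef)
    (hApprox : SpecApprox ε L Ltilde)
    (B Mstar M D : Matrix (Fin n) (Fin d) ℝ)
    (hMstar : L * Mstar = B)
    (hD : Ltilde * D = B - L * M) :
    Lnorm L ((M + D) - Mstar) ≤ cEps ε * Lnorm L (M - Mstar) := by
  have hsq : Real.exp (2 * ε) = Real.exp ε ^ 2 := Real.exp_nat_mul ε 2
  simpa only [cEps, hsq] using
    stmt17_general (Real.exp_nonneg (-ε)) hLt hApprox.1 hApprox.2 hMstar hD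
end
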